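/- Let M be an arbitrary von Neumann algebra (a unital *-subalgebra of the bounded operators on a complex Hilbert space that is equal to its double commutant). Then any 2-local derivation Δ : M → M is a derivation; in particular Δ is linear and satisfies Δ(xy) = Δ(x)y + xΔ(y) for all x, y ∈ M. -/

import Mathlib

/-- A derivation on an algebra: a `ℂ`-linear map `D` with
`D (x y) = D x · y + x · D y`. -/
def IsDerivationOn {R : Type*} [Ring R] [Algebra ℂ R] (D : R → R) : Prop :=
  IsLinearMap ℂ D ∧ ∀ x y : R, D (x * y) = D x * y + x * D y

/-- A 2-local derivation on an algebra: for every pair of points there is a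
derivation agreeing with `Δ` at both of them. -/
def Is2LocalDerivationOn {R : Type*} [Ring R] [Algebra ℂ R] (Δ : R → R) : Prop :=
  ∀ x y : R, ∃ D : R → R, IsDerivationOn D ∧ Δ x = D x ∧ Δ y = D y

/-!
Let `e` be an idempotent with `Δ e = 0`. The corner `e Δ(x) e` depends on `e x e` only, since a
derivation agreeing with `Δ` at `e x e - c e`, invertible in `e A e`, has to kill `e`. For
`n ∈ e A (1 - e)` and `m ∈ (1 - e) A e`, rescale `n`, let `v` invert the product of `e + n` and
`e + m` in `e A e`, and subtract a derivation so that `Δ` vanishes at `e` and at the idempotent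
`(e + m) v (e + n)`. Then the latter idempotent sees `a + (1 - e) x (1 - e)` and `a + n x m`, with
`a ∈ e A e`, as the same element, which yields `n Δ(x + y) m = n Δ(x) m + n Δ(y) m`.

So the additivity defect `d = Δ(x + y) - Δ x - Δ y` satisfies `n d m = 0`. In a semiprime ring this
forces `d` to commute with every idempotent `p` and to annihilate every commutator `p b - b p`; when
idempotents have dense span, `d` is central and annihilates all commutators. Such a `d` annihilates
the range of every derivation `D`, because `d a` is central for all `a` and derivations of a
C⋆-algebra vanish on the centre. Hence `d * d = 0` and `d = 0`. The Leibniz defect of the additive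
map `Δ` is a cocycle vanishing on idempotents, so it is also central and annihilates commutators,
and it is zero for the same reason. In a von Neumann algebra, range projections give binary
expansions of positive elements, so projections have dense span.
-/

section Ring

variable {R : Type*} [Ring R] {e n m : R}

-- For `n ∈ e R (1 - e)` and `m ∈ (1 - e) R e`, the product of the row `e + n` and the column
-- `e + m` is invertible in `e R e`, so it can be normalized away.
theorem exists_row_mul_eq_and_mul_column_eq (he : IsIdempotentElem e) (hen : e * n = n)
    (hne : n * e = 0) (hem : e * m = 0) (hme : m * e = m) (hu : IsUnit (1 + n * m)) :
    ∃ v, (e + n) * ((e + m) * v * (e + n)) = e + n ∧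
      (e + m) * v * (e + n) * (e + m) = e + m := by
  obtain ⟨u, hu⟩ := hu
  have hleft : (e + n) * (e + m) = e * u := by
    rw [hu]
    linear_combination (norm := noncomm_ring) he.eq + hem + hne - hen * m
  have hright : (e + n) * (e + m) = u * e := by
    rw [hu]
    linear_combination (norm := noncomm_ring) he.eq + hem + hne - n * hme
  refine ⟨↑u⁻¹, ?_, ?_⟩
  · calc (e + n) * ((e + m) * ↑u⁻¹ * (e + n))
        = (e + n) * (e + m) * ↑u⁻¹ * (e + n) := by noncomm_ring
      _ = e + n := by rw [hleft, Units.mul_inv_cancel_right, mul_add, he.eq, hen]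
  · calc (e + m) * ↑u⁻¹ * (e + n) * (e + m)
        = (e + m) * (↑u⁻¹ * ((e + n) * (e + m))) := by noncomm_ring
      _ = e + m := by rw [hright, Units.inv_mul_cancel_left, add_mul, he.eq, hme]

theorem mul_one_sub_mul_one_sub_mul (hne : n * e = 0) (hem : e * m = 0) (x : R) :
    n * ((1 - e) * x * (1 - e)) * m = n * x * m := by
  linear_combination (norm := noncomm_ring) hne * x * (e - 1) * m - n * x * hem

theorem row_mul_blockDiagonal_mul_column {a : R} (he : IsIdempotentElem e) (hne : n * e = 0)
    (hem : e * m = 0) (hea : e * a = a) (hae : a * e = a) (x : R) :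
    (e + n) * (a + (1 - e) * x * (1 - e)) * (e + m) = a + n * x * m := by
  have hna : n * a = 0 := by rw [← hea, ← mul_assoc, hne, zero_mul]
  have ham : a * m = 0 := by rw [← hae, mul_assoc, hem, mul_zero]
  have hx := mul_one_sub_mul_one_sub_mul hne hem x
  have hleft : e * ((1 - e) * x * (1 - e)) = 0 := by
    rw [← mul_assoc, ← mul_assoc, he.mul_one_sub_self, zero_mul, zero_mul]
  have hright : (1 - e) * x * (1 - e) * e = 0 := by
    rw [mul_assoc, he.one_sub_mul_self, mul_zero]
  linear_combination (norm := noncomm_ring)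
    hea * (e + m) + hna * (e + m) + hae + ham + hleft * (e + m) + n * hright + hx

/-- The failure of the Leibniz rule for `Δ` at the pair `(a, b)`; it is a Hochschild
`2`-cocycle, whether or not `Δ` is additive. -/
def leibnizDefect (Δ : R → R) (a b : R) : R :=
  Δ (a * b) - Δ a * b - a * Δ b

theorem leibnizDefect_cocycle (Δ : R → R) (a b c : R) :
    a * leibnizDefect Δ b c - leibnizDefect Δ (a * b) c + leibnizDefect Δ a (b * c) -
      leibnizDefect Δ a b * c = 0 := by
  simp only [leibnizDefect, mul_assoc a b c]
  noncomm_ring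

end Ring

section Algebra

variable {R : Type*} [Ring R] [Algebra ℂ R]

namespace IsDerivationOn

variable {D E : R → R}

protected theorem map_add (hD : IsDerivationOn D) (x y : R) : D (x + y) = D x + D y :=
  hD.1.map_add x y

protected theorem map_sub (hD : IsDerivationOn D) (x y : R) : D (x - y) = D x - D y :=
  hD.1.map_sub x y

protected theorem map_smul (hD : IsDerivationOn D) (c : ℂ) (x : R) : D (c • x) = c • D x :=
  hD.1.map_smul c x

protected theorem map_zero (hD : IsDerivationOn D) : D 0 = 0 := hD.1.map_zero

protected theorem map_mul (hD : IsDerivationOn D) (x y : R) : D (x * y) = D x * y + x * D y :=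
  hD.2 x y

protected theorem map_one (hD : IsDerivationOn D) : D 1 = 0 := by
  simpa using hD.map_mul 1 1

protected theorem map_algebraMap (hD : IsDerivationOn D) (c : ℂ) : D (algebraMap ℂ R c) = 0 := by
  rw [Algebra.algebraMap_eq_smul_one, hD.map_smul, hD.map_one, smul_zero]

protected theorem sub (hD : IsDerivationOn D) (hE : IsDerivationOn E) :
    IsDerivationOn fun x ↦ D x - E x := by
  refine ⟨(hD.1.mk' D - hE.1.mk' E).isLinear, fun x y ↦ ?_⟩
  simp only [hD.map_mul, hE.map_mul]
  noncomm_ring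

theorem commute_map_left (hD : IsDerivationOn D) {a b : R} (hab : Commute a b)
    (haDb : Commute a (D b)) : Commute (D a) b := by
  have h := congrArg D hab.eq
  rw [hD.map_mul, hD.map_mul, haDb.eq, add_comm] at h
  exact add_left_cancel h

theorem map_corner (hD : IsDerivationOn D) {e : R} (hDe : D e = 0) (x : R) :
    D (e * x * e) = e * D x * e := by
  simp [hD.map_mul, hDe]

theorem mul_map_mul_self (hD : IsDerivationOn D) {e : R} (he : IsIdempotentElem e) :
    e * D e * e = 0 := by
  have h := hD.map_mul e e
  rw [he.eq] at h
  linear_combination (norm := noncomm_ring) -(e * h * e) - he.eq * D e * e - e * D e * he.eq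

theorem map_eq_zero_of_commute_unit_mul (hD : IsDerivationOn D) {e g : R}
    (he : IsIdempotentElem e) (hg : IsUnit g) (hge : Commute g e)
    (hDe : Commute (D e) (g * e)) : D e = 0 := by
  have hcorner := hD.mul_map_mul_self he
  have hleft : e * D e = 0 := by
    refine hg.mul_right_eq_zero.1 ?_
    calc g * (e * D e) = e * (g * e * D e) := by
          linear_combination (norm := noncomm_ring) hge.eq * e * D e - g * he.eq * D e
      _ = e * D e * e * g := by rw [← hDe.eq, hge.eq]; noncomm_ring
      _ = 0 := by rw [hcorner, zero_mul]
  have hright : D e * e = 0 := by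
    refine hg.mul_left_eq_zero.1 ?_
    calc D e * e * g = g * (e * D e) := by rw [mul_assoc, ← hge.eq, hDe.eq, mul_assoc]
      _ = 0 := by rw [hleft, mul_zero]
  rw [← he.eq, hD.map_mul, hleft, hright, add_zero]

end IsDerivationOn

namespace Is2LocalDerivationOn

variable {Δ : R → R}

theorem sub_isDerivationOn (hΔ : Is2LocalDerivationOn Δ) {E : R → R} (hE : IsDerivationOn E) :
    Is2LocalDerivationOn fun x ↦ Δ x - E x := by
  intro x y
  obtain ⟨D, hD, hx, hy⟩ := hΔ x y
  exact ⟨_, hD.sub hE, by simp [hx], by simp [hy]⟩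

protected theorem map_smul (hΔ : Is2LocalDerivationOn Δ) (c : ℂ) (x : R) :
    Δ (c • x) = c • Δ x := by
  obtain ⟨D, hD, hcx, hx⟩ := hΔ (c • x) x
  rw [hcx, hx, hD.map_smul]

protected theorem map_zero (hΔ : Is2LocalDerivationOn Δ) : Δ 0 = 0 := by
  simpa using hΔ.map_smul 0 0

theorem map_mul_self (hΔ : Is2LocalDerivationOn Δ) (x : R) :
    Δ (x * x) = Δ x * x + x * Δ x := by
  obtain ⟨D, hD, hxx, hx⟩ := hΔ (x * x) x
  rw [hxx, hx, hD.map_mul]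

theorem map_one_sub (hΔ : Is2LocalDerivationOn Δ) (x : R) : Δ (1 - x) = -Δ x := by
  obtain ⟨D, hD, hx', hx⟩ := hΔ (1 - x) x
  rw [hx', hx, hD.map_sub, hD.map_one, zero_sub]

theorem commute_map_of_map_eq_zero (hΔ : Is2LocalDerivationOn Δ) {e w : R} (hΔe : Δ e = 0)
    (hwe : Commute w e) : Commute (Δ w) e := by
  obtain ⟨D, hD, he, hw⟩ := hΔ e w
  rw [hw]
  exact hD.commute_map_left hwe (by simp [← he, hΔe])

theorem map_idempotent_mul (hΔ : Is2LocalDerivationOn Δ) (hadd : ∀ x y, Δ (x + y) = Δ x + Δ y)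
    {p : R} (hp : IsIdempotentElem p) (x : R) : Δ (p * x) = Δ p * x + p * Δ x := by
  have hpx : Δ (p * x) = Δ p * (p * x) + p * Δ (p * x) := by
    obtain ⟨D, hD, h, h'⟩ := hΔ p (p * x)
    rw [h, h', ← hD.map_mul, ← mul_assoc, hp.eq]
  have hqx : 0 = Δ p * ((1 - p) * x) + p * Δ ((1 - p) * x) := by
    obtain ⟨D, hD, h, h'⟩ := hΔ p ((1 - p) * x)
    rw [h, h', ← hD.map_mul, ← mul_assoc, hp.mul_one_sub_self, zero_mul, hD.map_zero]
  have hx : Δ x = Δ (p * x) + Δ ((1 - p) * x) := by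
    rw [← hadd, ← add_mul, add_sub_cancel, one_mul]
  rw [hx]
  linear_combination (norm := noncomm_ring) hpx + hqx

end Is2LocalDerivationOn

namespace Is2LocalDerivationOn

variable {Δ : R → R} {p : R} (hΔ : Is2LocalDerivationOn Δ)
  (hadd : ∀ x y, Δ (x + y) = Δ x + Δ y)

include hΔ hadd

theorem leibnizDefect_swap (a b : R) : leibnizDefect Δ b a = -leibnizDefect Δ a b := by
  have h := hΔ.map_mul_self (a + b)
  have hsq : (a + b) * (a + b) = a * a + b * b + (a * b + b * a) := by noncomm_ring
  rw [hsq, hadd, hadd, hadd (a * b), hadd a b, hΔ.map_mul_self, hΔ.map_mul_self] at h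
  simp only [leibnizDefect]
  linear_combination (norm := noncomm_ring) h

theorem leibnizDefect_idempotent_left (hp : IsIdempotentElem p) (b : R) :
    leibnizDefect Δ p b = 0 := by
  rw [leibnizDefect, hΔ.map_idempotent_mul hadd hp, add_sub_cancel_left, sub_self]

theorem leibnizDefect_idempotent_right (hp : IsIdempotentElem p) (b : R) :
    leibnizDefect Δ b p = 0 := by
  rw [hΔ.leibnizDefect_swap hadd, hΔ.leibnizDefect_idempotent_left hadd hp, neg_zero]

theorem leibnizDefect_idempotent_mul_left (hp : IsIdempotentElem p) (b c : R) :
    leibnizDefect Δ (p * b) c = p * leibnizDefect Δ b c := by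
  have h := leibnizDefect_cocycle Δ p b c
  rw [hΔ.leibnizDefect_idempotent_left hadd hp, hΔ.leibnizDefect_idempotent_left hadd hp,
    zero_mul, add_zero, sub_zero, sub_eq_zero] at h
  exact h.symm

theorem leibnizDefect_mul_idempotent_right (hp : IsIdempotentElem p) (b c : R) :
    leibnizDefect Δ b (c * p) = leibnizDefect Δ b c * p := by
  have h := leibnizDefect_cocycle Δ b c p
  rwa [hΔ.leibnizDefect_idempotent_right hadd hp, hΔ.leibnizDefect_idempotent_right hadd hp,
    mul_zero, sub_zero, zero_add, sub_eq_zero] at h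

theorem leibnizDefect_mul_idempotent_left (hp : IsIdempotentElem p) (b c : R) :
    leibnizDefect Δ (b * p) c = leibnizDefect Δ b (p * c) := by
  have h := leibnizDefect_cocycle Δ b p c
  rwa [hΔ.leibnizDefect_idempotent_left hadd hp, hΔ.leibnizDefect_idempotent_right hadd hp,
    mul_zero, zero_mul, sub_zero, zero_sub, neg_add_eq_zero] at h

theorem commute_leibnizDefect_of_isIdempotentElem (hp : IsIdempotentElem p) (b c : R) :
    Commute (leibnizDefect Δ b c) p := by
  calc leibnizDefect Δ b c * p = leibnizDefect Δ (b * p) c := by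
        rw [hΔ.leibnizDefect_swap hadd c b, hΔ.leibnizDefect_swap hadd c (b * p), neg_mul,
          hΔ.leibnizDefect_mul_idempotent_right hadd hp]
    _ = leibnizDefect Δ b (p * c) := hΔ.leibnizDefect_mul_idempotent_left hadd hp b c
    _ = p * leibnizDefect Δ b c := by
        rw [hΔ.leibnizDefect_swap hadd (p * c) b, hΔ.leibnizDefect_swap hadd c b, mul_neg,
          hΔ.leibnizDefect_idempotent_mul_left hadd hp]

end Is2LocalDerivationOn

end Algebra

section BanachAlgebra

variable {A : Type*} [NormedRing A] [NormedAlgebra ℂ A] [CompleteSpace A] {Δ : A → A}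

theorem exists_ne_zero_isUnit_sub_smul_one (x : A) :
    ∃ c : ℂ, c ≠ 0 ∧ IsUnit (x - c • (1 : A)) := by
  obtain ⟨c, hc⟩ := (Set.ne_univ_iff_exists_notMem _).1
    ((spectrum.isCompact (𝕜 := ℂ) x).insert 0).ne_univ
  rw [Set.mem_insert_iff, not_or, spectrum.notMem_iff, Algebra.algebraMap_eq_smul_one] at hc
  exact ⟨c, hc.1, by simpa using hc.2.neg⟩

namespace Is2LocalDerivationOn

theorem corner_congr (hΔ : Is2LocalDerivationOn Δ) {e : A} (he : IsIdempotentElem e)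
    (hΔe : Δ e = 0) {x y : A} (hxy : e * x * e = e * y * e) : e * Δ x * e = e * Δ y * e := by
  obtain ⟨c, -, hg⟩ := exists_ne_zero_isUnit_sub_smul_one (e * x * e)
  set g := e * x * e - c • (1 : A) with hgdef
  have hge : Commute g e := by
    refine Commute.sub_left ?_ ((Commute.one_left e).smul_left c)
    simp only [Commute, SemiconjBy, mul_assoc, he.eq, he.mul_self_mul]
  have hwe : Commute (g * e) e := hge.mul_left (Commute.refl e)
  -- A derivation that agrees with `Δ` at the witness `g * e` is forced to kill `e`.
  suffices hwitness : ∀ z, e * z * e = e * x * e → e * Δ z * e = Δ (g * e) from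
    (hwitness x rfl).trans (hwitness y hxy.symm).symm
  intro z hz
  obtain ⟨D, hD, hΔz, hΔw⟩ := hΔ z (g * e)
  have hDe : D e = 0 := hD.map_eq_zero_of_commute_unit_mul he hg hge <|
    hD.commute_map_left hwe.symm (hΔw ▸ (hΔ.commute_map_of_map_eq_zero hΔe hwe).symm)
  have hcorner : e * z * e = g * e + c • e := by
    rw [hz, hgdef, sub_mul, smul_one_mul, sub_add_cancel, he.mul_mul_self]
  rw [hΔz, ← hD.map_corner hDe, hcorner, hD.map_add, hD.map_smul, hDe, smul_zero, add_zero, hΔw]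

theorem compression_congr (hΔ : Is2LocalDerivationOn Δ) {r v c : A}
    (hr : r * (c * v * r) = r) (hc : c * v * r * c = c) (hΔq : Δ (c * v * r) = 0) {x y : A}
    (hxy : r * x * c = r * y * c) : r * Δ x * c = r * Δ y * c := by
  set q := c * v * r with hqdef
  have hq : IsIdempotentElem q := by
    rw [IsIdempotentElem]
    nth_rw 1 [hqdef]
    rw [mul_assoc, hr]
  have hqxy : q * x * q = q * y * q := by
    linear_combination (norm := (rw [hqdef]; noncomm_ring)) c * v * hxy * v * r
  have h := hΔ.corner_congr hq hΔq hqxy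
  have hcompress (z : A) : r * (q * z * q) * c = r * z * c :=
    calc r * (q * z * q) * c = r * q * z * (q * c) := by noncomm_ring
      _ = r * z * c := by rw [hr, hc]
  rw [← hcompress, h, hcompress]

theorem compression_blockDiagonal (hΔ : Is2LocalDerivationOn Δ) {e n m a : A}
    (he : IsIdempotentElem e) (hΔe : Δ e = 0) (hne : n * e = 0) (hem : e * m = 0)
    (hea : e * a = a) (hae : a * e = a) (x : A) :
    (e + n) * Δ (a + (1 - e) * x * (1 - e)) * (e + m) = e * Δ a * e + n * Δ x * m := by
  set w := a + (1 - e) * x * (1 - e) with hw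
  have hΔf : Δ (1 - e) = 0 := by rw [hΔ.map_one_sub, hΔe, neg_zero]
  have hwe : w * e = a := by
    rw [hw, add_mul, hae, mul_assoc, he.one_sub_mul_self, mul_zero, add_zero]
  have hew : e * w = a := by
    rw [hw, mul_add, hea, mul_assoc, ← mul_assoc, he.mul_one_sub_self, zero_mul, add_zero]
  have hcomm := hΔ.commute_map_of_map_eq_zero hΔe (hwe.trans hew.symm)
  have hcorner : e * Δ w * e = e * Δ a * e :=
    hΔ.corner_congr he hΔe (by rw [hew, hea])
  have hcocorner : (1 - e) * Δ w * (1 - e) = (1 - e) * Δ x * (1 - e) := by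
    refine hΔ.corner_congr he.one_sub hΔf ?_
    rw [sub_mul 1 e w, one_mul, hew, hw, add_sub_cancel_left, he.one_sub.mul_mul_self]
  have hnm : n * Δ w * m = n * Δ x * m := by
    rw [← mul_one_sub_mul_one_sub_mul hne hem, hcocorner, mul_one_sub_mul_one_sub_mul hne hem]
  linear_combination (norm := noncomm_ring)
    hcorner + hnm - hcomm.eq * m + Δ w * hem + n * hcomm.eq + hne * Δ w

theorem compression_add_compression (hΔ : Is2LocalDerivationOn Δ) {e n m v a : A}
    (he : IsIdempotentElem e) (hen : e * n = n) (hne : n * e = 0) (hem : e * m = 0)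
    (hme : m * e = m) (hr : (e + n) * ((e + m) * v * (e + n)) = e + n)
    (hc : (e + m) * v * (e + n) * (e + m) = e + m) (hΔe : Δ e = 0)
    (hΔq : Δ ((e + m) * v * (e + n)) = 0) (hea : e * a = a) (hae : a * e = a) (x : A) :
    e * Δ a * e + n * Δ x * m = e * Δ (a + n * x * m) * e := by
  set b := a + n * x * m with hb
  have heb : e * b = b := by
    rw [hb, mul_add, hea, ← mul_assoc, ← mul_assoc, hen]
  have hbe : b * e = b := by rw [hb, add_mul, hae, mul_assoc, hme]
  have hsame : (e + n) * (a + (1 - e) * x * (1 - e)) * (e + m) =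
      (e + n) * (b + (1 - e) * 0 * (1 - e)) * (e + m) := by
    rw [row_mul_blockDiagonal_mul_column he hne hem hea hae,
      row_mul_blockDiagonal_mul_column he hne hem heb hbe, mul_zero, zero_mul, add_zero]
  calc e * Δ a * e + n * Δ x * m
      = (e + n) * Δ (a + (1 - e) * x * (1 - e)) * (e + m) :=
        (hΔ.compression_blockDiagonal he hΔe hne hem hea hae x).symm
    _ = (e + n) * Δ (b + (1 - e) * 0 * (1 - e)) * (e + m) := hΔ.compression_congr hr hc hΔq hsame
    _ = e * Δ b * e + n * Δ 0 * m := hΔ.compression_blockDiagonal he hΔe hne hem heb hbe 0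
    _ = e * Δ b * e := by rw [hΔ.map_zero, mul_zero, zero_mul, add_zero]

theorem mul_map_add_mul_of_isUnit (hΔ : Is2LocalDerivationOn Δ) {e n m : A}
    (he : IsIdempotentElem e) (hen : e * n = n) (hne : n * e = 0) (hem : e * m = 0)
    (hme : m * e = m) (hu : IsUnit (1 + n * m)) (x y : A) :
    n * Δ (x + y) * m = n * Δ x * m + n * Δ y * m := by
  obtain ⟨v, hr, hc⟩ := exists_row_mul_eq_and_mul_column_eq he hen hne hem hme hu
  obtain ⟨D, hD, hDe, hDq⟩ := hΔ e ((e + m) * v * (e + n))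
  have hΓ := hΔ.sub_isDerivationOn hD
  set Γ : A → A := fun z ↦ Δ z - D z with hΓdef
  have hadd {a : A} (hea : e * a = a) (hae : a * e = a) (z : A) :
      e * Γ a * e + n * Γ z * m = e * Γ (a + n * z * m) * e :=
    hΓ.compression_add_compression he hen hne hem hme hr hc (sub_eq_zero.2 hDe)
      (sub_eq_zero.2 hDq) hea hae z
  have hpure (z : A) : n * Γ z * m = e * Γ (n * z * m) * e := by
    simpa [hΓ.map_zero] using hadd (mul_zero e) (zero_mul e) z
  have hΓadd : n * Γ (x + y) * m = n * Γ x * m + n * Γ y * m := by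
    rw [hpure (x + y), mul_add, add_mul, ← hadd _ _ y, ← hpure x]
    · rw [← mul_assoc, ← mul_assoc, hen]
    · rw [mul_assoc, hme]
  simp only [hΓdef, hD.map_add] at hΓadd
  linear_combination (norm := noncomm_ring) hΓadd

theorem mul_map_add_mul (hΔ : Is2LocalDerivationOn Δ) {e n m : A}
    (he : IsIdempotentElem e) (hen : e * n = n) (hne : n * e = 0) (hem : e * m = 0)
    (hme : m * e = m) (x y : A) : n * Δ (x + y) * m = n * Δ x * m + n * Δ y * m := by
  obtain ⟨c, hc0, hc⟩ := exists_ne_zero_isUnit_sub_smul_one (n * m)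
  have hu : IsUnit (1 + (-c⁻¹ • n) * m) := by
    have hscale : 1 + (-c⁻¹ • n) * m = -c⁻¹ • (n * m - c • (1 : A)) := by
      rw [smul_sub, smul_smul, neg_mul, inv_mul_cancel₀ hc0, smul_mul_assoc, neg_one_smul,
        sub_neg_eq_add, add_comm]
    rw [hscale]
    exact hc.smul (Units.mk0 (-c⁻¹) (neg_ne_zero.2 (inv_ne_zero hc0)))
  have h := hΔ.mul_map_add_mul_of_isUnit he (by rw [mul_smul_comm, hen])
    (by rw [smul_mul_assoc, hne, smul_zero]) hem hme hu x y
  simp only [smul_mul_assoc, ← smul_add] at h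
  exact smul_right_injective A (neg_ne_zero.2 (inv_ne_zero hc0)) h

theorem corner_mul_map_add_sub_mul_corner (hΔ : Is2LocalDerivationOn Δ) {e : A}
    (he : IsIdempotentElem e) (x y a b : A) :
    (1 - e) * a * e * (Δ (x + y) - Δ x - Δ y) * (e * b * (1 - e)) = 0 := by
  have h := hΔ.mul_map_add_mul (n := (1 - e) * a * e) (m := e * b * (1 - e)) he.one_sub
    (by rw [← mul_assoc, ← mul_assoc, he.one_sub.eq])
    (by rw [mul_assoc, he.mul_one_sub_self, mul_zero])
    (by rw [← mul_assoc, ← mul_assoc, he.one_sub_mul_self, zero_mul, zero_mul])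
    (by rw [mul_assoc, he.one_sub.eq]) x y
  rw [mul_sub, mul_sub, sub_mul, sub_mul, h]
  abel

end Is2LocalDerivationOn

end BanachAlgebra

/-- A ring is semiprime if `x R x = 0` forces `x = 0`; spelled out on elements, since the
ring need not be commutative. -/
def IsSemiprimeRing (R : Type*) [Ring R] : Prop :=
  ∀ x : R, (∀ z, x * z * x = 0) → x = 0

namespace IsSemiprimeRing

variable {R : Type*} [Ring R] {d p : R}

theorem eq_zero_of_central_of_mul_self_eq_zero (hR : IsSemiprimeRing R) (hd : ∀ x, Commute d x)
    (h : d * d = 0) : d = 0 :=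
  hR d fun z ↦ by rw [mul_assoc, ← (hd z).eq, ← mul_assoc, h, zero_mul]

variable (hR : IsSemiprimeRing R)
  (hd : ∀ e : R, IsIdempotentElem e → ∀ a b, (1 - e) * a * e * d * (e * b * (1 - e)) = 0)

include hR hd

theorem corner_mul_eq_zero (hp : IsIdempotentElem p) (b : R) :
    p * d * (p * b * (1 - p)) = 0 := by
  refine hR _ fun z ↦ ?_
  have h : p * d * (p * b * (1 - p)) * z * (p * d * (p * b * (1 - p))) =
      p * d * (p * b) * ((1 - p) * z * p * d * (p * b * (1 - p))) := by noncomm_ring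
  rw [h, hd p hp, mul_zero]

-- `p + p a (1 - p)` is again idempotent; compare `corner_mul_eq_zero` for it and for `p`.
theorem offDiagonal_mul_offDiagonal_eq_zero (hp : IsIdempotentElem p) (a b : R) :
    p * a * (1 - p) * d * (p * b * (1 - p)) = 0 := by
  set n := p * a * (1 - p) with hn
  set q := p * b * (1 - p) with hq
  have hpn : p * n = n := by rw [hn, ← mul_assoc, ← mul_assoc, hp.eq]
  have hpq : p * q = q := by rw [hq, ← mul_assoc, ← mul_assoc, hp.eq]
  have hnp : n * p = 0 := by rw [hn, mul_assoc, hp.one_sub_mul_self, mul_zero]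
  have hqp : q * p = 0 := by rw [hq, mul_assoc, hp.one_sub_mul_self, mul_zero]
  have hnn : n * n = 0 := by rw [← hpn, ← mul_assoc, mul_assoc p n p, hnp, mul_zero, zero_mul]
  have hnq : n * q = 0 := by rw [← hpq, ← mul_assoc, hnp, zero_mul]
  have hqn : q * n = 0 := by rw [← hpn, ← mul_assoc, hqp, zero_mul]
  have hpn_idem : IsIdempotentElem (p + n) := by
    rw [IsIdempotentElem]
    linear_combination (norm := noncomm_ring) hp.eq + hpn + hnp + hnn
  have hcorner : (p + n) * q * (1 - (p + n)) = q := by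
    linear_combination (norm := noncomm_ring) hpq * (1 - p - n) + hnq * (1 - p - n) - hqp - hqn
  have h := hR.corner_mul_eq_zero hd hp b
  have h' := hR.corner_mul_eq_zero hd hpn_idem q
  rw [← hq] at h
  rw [hcorner] at h'
  linear_combination (norm := noncomm_ring) h' - h

theorem one_sub_mul_mul_eq_zero (hp : IsIdempotentElem p) : (1 - p) * d * p = 0 := by
  have hcol (b : R) : (1 - p) * d * (p * b * (1 - p)) = 0 := by
    refine hR _ fun z ↦ ?_
    have h : (1 - p) * d * (p * b * (1 - p)) * z * ((1 - p) * d * (p * b * (1 - p))) =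
        (1 - p) * d * (p * b * (1 - p) * z * (1 - p) * d * (p * b * (1 - p))) := by noncomm_ring
    have h' := hR.offDiagonal_mul_offDiagonal_eq_zero hd hp (b * (1 - p) * z) b
    rw [h]
    linear_combination (norm := noncomm_ring) (1 - p) * d * h'
  refine hR _ fun z ↦ ?_
  linear_combination (norm := noncomm_ring) hcol z * d * p

theorem commute_of_isIdempotentElem (hp : IsIdempotentElem p) : Commute d p := by
  have h := hR.one_sub_mul_mul_eq_zero hd hp
  have h' := hR.one_sub_mul_mul_eq_zero hd hp.one_sub
  rw [Commute, SemiconjBy]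
  linear_combination (norm := noncomm_ring) h - h'

theorem mul_commutator_eq_zero_of_isIdempotentElem (hp : IsIdempotentElem p) (b : R) :
    d * (p * b - b * p) = 0 := by
  have hdp := (hR.commute_of_isIdempotentElem hd hp).eq
  have h := hR.corner_mul_eq_zero hd hp b
  have h' := hR.corner_mul_eq_zero hd hp.one_sub b
  linear_combination (norm := noncomm_ring) h - h' + hdp * p * b * (1 - p) -
    d * hp.eq * b * (1 - p) + hdp * (1 - p) * b * p + d * hp.eq * b * p

end IsSemiprimeRing

section DenseSpan

variable {𝕜 A : Type*} [NontriviallyNormedField 𝕜] [NormedRing A] [NormedAlgebra 𝕜 A] {s : Set A}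

theorem commute_of_dense_span (hs : Dense (Submodule.span 𝕜 s : Set A)) {d : A}
    (hd : ∀ a ∈ s, Commute d a) (a : A) : Commute d a :=
  DFunLike.congr_fun (ContinuousLinearMap.ext_on hs
    (f := ContinuousLinearMap.mul 𝕜 A d) (g := (ContinuousLinearMap.mul 𝕜 A).flip d)
    fun a ha ↦ (hd a ha).eq) a

theorem mul_commutator_eq_zero_of_dense_span (hs : Dense (Submodule.span 𝕜 s : Set A)) {d : A}
    (hd : ∀ a ∈ s, ∀ b, d * (a * b - b * a) = 0) (a b : A) : d * (a * b - b * a) = 0 :=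
  DFunLike.congr_fun (ContinuousLinearMap.ext_on hs
    (f := ContinuousLinearMap.mul 𝕜 A d ∘L
      ((ContinuousLinearMap.mul 𝕜 A).flip b - ContinuousLinearMap.mul 𝕜 A b)) (g := 0)
    fun a ha ↦ hd a ha b) a

end DenseSpan

section CStarAlgebra

variable {A : Type*} [CStarAlgebra A]

theorem isSemiprimeRing_cstarAlgebra : IsSemiprimeRing A := by
  intro x hx
  have h : star (star x * x) * (star x * x) = 0 := by
    rw [star_mul, star_star, mul_assoc, ← mul_assoc x, hx, mul_zero]
  exact CStarRing.star_mul_self_eq_zero_iff x |>.1 (CStarRing.star_mul_self_eq_zero_iff _ |>.1 h)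

namespace IsDerivationOn

variable {D : A → A}

theorem algHom_map_eq_zero_of_nonneg [PartialOrder A] [StarOrderedRing A] (hD : IsDerivationOn D)
    (φ : A →ₐ[ℂ] ℂ) {a : A} (ha : 0 ≤ a) (hφa : φ a = 0) : φ (D a) = 0 := by
  have hsqrt := CFC.sqrt_mul_sqrt_self a ha
  have hφsqrt : φ (CFC.sqrt a) = 0 := by
    rwa [← hsqrt, map_mul, mul_self_eq_zero] at hφa
  rw [← hsqrt, hD.map_mul, map_add, map_mul, map_mul, hφsqrt, mul_zero, zero_mul, add_zero]

theorem algHom_map_eq_zero_of_isSelfAdjoint (hD : IsDerivationOn D) (φ : A →ₐ[ℂ] ℂ) {u : A}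
    (hu : IsSelfAdjoint u) (hφu : φ u = 0) : φ (D u) = 0 := by
  let _ := CStarAlgebra.spectralOrder A
  let _ := CStarAlgebra.spectralOrderedRing A
  have hsub := CFC.posPart_sub_negPart u hu
  have heq : φ u⁺ = φ u⁻ := by rw [← sub_eq_zero, ← map_sub, hsub, hφu]
  have hneg : φ u⁻ = 0 := by
    have hmul : φ u⁺ * φ u⁻ = 0 := by rw [← map_mul, CFC.posPart_mul_negPart, map_zero]
    rwa [heq, mul_self_eq_zero] at hmul
  rw [← hsub, hD.map_sub, map_sub,
    hD.algHom_map_eq_zero_of_nonneg φ (CFC.posPart_nonneg u) (heq.trans hneg),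
    hD.algHom_map_eq_zero_of_nonneg φ (CFC.negPart_nonneg u) hneg, sub_zero]

theorem algHom_map_eq_zero (hD : IsDerivationOn D) (φ : A →ₐ[ℂ] ℂ) (x : A) : φ (D x) = 0 := by
  have hsa (a : A) (ha : IsSelfAdjoint a) : φ (D a) = 0 := by
    have h := hD.algHom_map_eq_zero_of_isSelfAdjoint φ (u := a - algebraMap ℂ A (φ a))
      (ha.sub ?_) (by simp)
    · rwa [hD.map_sub, hD.map_algebraMap, sub_zero] at h
    · exact (ha.map φ).algebraMap A
  rw [← realPart_add_I_smul_imaginaryPart x, hD.map_add, hD.map_smul, map_add, map_smul,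
    hsa _ (realPart x).2, hsa _ (imaginaryPart x).2, smul_zero, add_zero]

theorem eq_zero_of_commCStarAlgebra {Z : Type*} [CommCStarAlgebra Z] {D : Z → Z}
    (hD : IsDerivationOn D) (x : Z) : D x = 0 := by
  refine (gelfandTransform_isometry Z).injective ?_
  ext φ
  rw [map_zero]
  exact hD.algHom_map_eq_zero (WeakDual.CharacterSpace.toAlgHom φ) x

theorem map_eq_zero_of_central (hD : IsDerivationOn D) {c : A} (hc : ∀ x, Commute c x) :
    D c = 0 := by
  let Z := StarSubalgebra.centralizer ℂ (Set.univ : Set A)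
  have mem_Z (z : A) : z ∈ Z ↔ ∀ x, Commute z x := by
    rw [StarSubalgebra.mem_centralizer_iff]
    exact ⟨fun h x ↦ (h x trivial).1.symm, fun h x _ ↦ ⟨(h x).symm, (h _).symm⟩⟩
  have hclosed : IsClosed (Z : Set A) := by
    rw [StarSubalgebra.coe_centralizer]
    exact Set.isClosed_centralizer _
  let _ : CStarAlgebra Z := StarSubalgebra.cstarAlgebra Z
  let _ : CommCStarAlgebra Z :=
    { (inferInstance : CStarAlgebra Z) with
      mul_comm x y := Subtype.ext ((mem_Z x).1 x.2 y) }
  let E (z : Z) : Z := ⟨D z, (mem_Z _).2 fun x ↦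
    hD.commute_map_left ((mem_Z z).1 z.2 x) ((mem_Z z).1 z.2 (D x))⟩
  have hE : IsDerivationOn E :=
    ⟨⟨fun x y ↦ Subtype.ext (hD.map_add x y), fun r x ↦ Subtype.ext (hD.map_smul r x)⟩,
      fun x y ↦ Subtype.ext (hD.map_mul x y)⟩
  exact congrArg Subtype.val (hE.eq_zero_of_commCStarAlgebra ⟨c, (mem_Z c).2 hc⟩)

theorem mul_map_eq_zero_of_central (hD : IsDerivationOn D) {d : A} (hd : ∀ x, Commute d x)
    (hcomm : ∀ x y, d * (x * y - y * x) = 0) (a : A) : d * D a = 0 := by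
  have hda (x : A) : Commute (d * a) x := by
    rw [Commute, SemiconjBy]
    linear_combination (norm := noncomm_ring) hcomm a x + (hd x).eq * a
  have h := hD.map_eq_zero_of_central hda
  rwa [hD.map_mul, hD.map_eq_zero_of_central hd, zero_mul, zero_add] at h

end IsDerivationOn

namespace Is2LocalDerivationOn

variable {Δ : A → A}

theorem mul_map_eq_zero_of_central (hΔ : Is2LocalDerivationOn Δ) {d : A}
    (hd : ∀ x, Commute d x) (hcomm : ∀ x y, d * (x * y - y * x) = 0) (a : A) : d * Δ a = 0 := by
  obtain ⟨D, hD, hDa, -⟩ := hΔ a a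
  rw [hDa, hD.mul_map_eq_zero_of_central hd hcomm]

variable (hΔ : Is2LocalDerivationOn Δ)
  (hA : Dense (Submodule.span ℂ {p : A | IsIdempotentElem p} : Set A))

include hΔ hA

protected theorem map_add (x y : A) : Δ (x + y) = Δ x + Δ y := by
  set d := Δ (x + y) - Δ x - Δ y with hd
  have hcorner (e : A) (he : IsIdempotentElem e) (a b : A) :
      (1 - e) * a * e * d * (e * b * (1 - e)) = 0 :=
    hΔ.corner_mul_map_add_sub_mul_corner he x y a b
  have hcentral := commute_of_dense_span hA fun _ hp ↦
    isSemiprimeRing_cstarAlgebra.commute_of_isIdempotentElem hcorner hp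
  have hcomm := mul_commutator_eq_zero_of_dense_span hA fun _ hp ↦
    isSemiprimeRing_cstarAlgebra.mul_commutator_eq_zero_of_isIdempotentElem hcorner hp
  have hd0 : d = 0 :=
    isSemiprimeRing_cstarAlgebra.eq_zero_of_central_of_mul_self_eq_zero hcentral <| by
      nth_rw 2 [hd]
      simp only [mul_sub, hΔ.mul_map_eq_zero_of_central hcentral hcomm, sub_zero]
  rwa [hd, sub_sub, sub_eq_zero] at hd0

theorem commute_leibnizDefect (b c a : A) : Commute (leibnizDefect Δ b c) a :=
  commute_of_dense_span hA (fun _ hp ↦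
    hΔ.commute_leibnizDefect_of_isIdempotentElem (hΔ.map_add hA) hp b c) a

theorem leibnizDefect_mul_commutator_eq_zero (x y a b : A) :
    leibnizDefect Δ x y * (a * b - b * a) = 0 := by
  refine mul_commutator_eq_zero_of_dense_span hA (fun p hp b ↦ ?_) a b
  have h := (hΔ.commute_leibnizDefect hA (p * x) y b).eq
  rw [hΔ.leibnizDefect_idempotent_mul_left (hΔ.map_add hA) hp] at h
  have hxy (z : A) := (hΔ.commute_leibnizDefect hA x y z).eq
  linear_combination (norm := noncomm_ring) h + hxy p * b - b * hxy p - hxy b * p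

protected theorem map_mul (x y : A) : Δ (x * y) = Δ x * y + x * Δ y := by
  have hcentral := hΔ.commute_leibnizDefect hA x y
  have hkill := hΔ.mul_map_eq_zero_of_central hcentral
    (hΔ.leibnizDefect_mul_commutator_eq_zero hA x y)
  have hzero : leibnizDefect Δ x y = 0 :=
    isSemiprimeRing_cstarAlgebra.eq_zero_of_central_of_mul_self_eq_zero hcentral <| by
      calc leibnizDefect Δ x y * leibnizDefect Δ x y
          = leibnizDefect Δ x y * Δ (x * y) - leibnizDefect Δ x y * Δ x * y -
              leibnizDefect Δ x y * x * Δ y := by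
            nth_rw 2 [leibnizDefect]
            noncomm_ring
        _ = 0 := by
            rw [(hcentral x).eq, mul_assoc x, hkill, hkill, hkill, zero_mul, mul_zero]
            simp only [sub_zero]
  rw [leibnizDefect, sub_sub, sub_eq_zero] at hzero
  exact hzero

end Is2LocalDerivationOn

end CStarAlgebra

/-- `r` is the range projection (left support) of `k`: the star projection that acts on `k`
as the identity from the left and is annihilated from the left by whatever annihilates `k`. -/
structure IsRangeProjection {R : Type*} [MulZeroClass R] [Star R] (r k : R) : Prop where
  isStarProjection : IsStarProjection r
  mul_eq : r * k = k
  mul_eq_zero : ∀ y, y * k = 0 → y * r = 0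

section RangeProjection

variable {A : Type*} [CStarAlgebra A]

namespace IsRangeProjection

variable {u r : A}

theorem negPart_mul (hr : IsRangeProjection r u⁺) : u⁻ * r = 0 :=
  hr.mul_eq_zero _ (CFC.negPart_mul_posPart u)

variable [PartialOrder A] [StarOrderedRing A]

theorem mul_negPart (hr : IsRangeProjection r u⁺) : r * u⁻ = 0 := by
  simpa [hr.isStarProjection.isSelfAdjoint.star_eq,
    (IsSelfAdjoint.of_nonneg (CFC.negPart_nonneg u)).star_eq] using congrArg star hr.negPart_mul

theorem posPart_mul (hr : IsRangeProjection r u⁺) : u⁺ * r = u⁺ := by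
  simpa [hr.isStarProjection.isSelfAdjoint.star_eq,
    (IsSelfAdjoint.of_nonneg (CFC.posPart_nonneg u)).star_eq] using congrArg star hr.mul_eq

theorem mul_mul_self (hr : IsRangeProjection r u⁺) (hu : IsSelfAdjoint u) : r * u * r = u⁺ := by
  nth_rw 1 [← CFC.posPart_sub_negPart u hu]
  rw [mul_sub, hr.mul_eq, hr.mul_negPart, sub_zero, hr.posPart_mul]

theorem one_sub_mul_mul_one_sub (hr : IsRangeProjection r u⁺) (hu : IsSelfAdjoint u) :
    (1 - r) * u * (1 - r) = -u⁻ := by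
  nth_rw 1 [← CFC.posPart_sub_negPart u hu]
  linear_combination (norm := noncomm_ring)
    hr.mul_eq * (r - 1) + hr.mul_negPart * (1 - r) + hr.negPart_mul

theorem le_of_le_one (hr : IsRangeProjection r u⁺) (hu : IsSelfAdjoint u) (hu1 : u ≤ 1) :
    u ≤ r :=
  calc u ≤ u⁺ := CFC.le_posPart hu
    _ = r * u * r := (hr.mul_mul_self hu).symm
    _ ≤ r * 1 * r := hr.isStarProjection.isSelfAdjoint.conjugate_le_conjugate hu1
    _ = r := by rw [mul_one, hr.isStarProjection.isIdempotentElem.eq]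

theorem sub_one_le_of_neg_one_le (hr : IsRangeProjection r u⁺) (hu : IsSelfAdjoint u)
    (hu1 : -1 ≤ u) : r - 1 ≤ u :=
  calc r - 1 = (1 - r) * -1 * (1 - r) := by
        rw [mul_neg_one, neg_mul, hr.isStarProjection.isIdempotentElem.one_sub.eq, neg_sub]
    _ ≤ (1 - r) * u * (1 - r) :=
        hr.isStarProjection.one_sub.isSelfAdjoint.conjugate_le_conjugate hu1
    _ = -u⁻ := hr.one_sub_mul_mul_one_sub hu
    _ ≤ u := CFC.neg_negPart_le hu

theorem add_self_sub_mem_Icc {h : A} (hr : IsRangeProjection r (h + h - 1)⁺)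
    (hh : h ∈ Set.Icc 0 1) : h + h - r ∈ Set.Icc 0 1 := by
  have hsa : IsSelfAdjoint (h + h - 1) :=
    ((IsSelfAdjoint.of_nonneg hh.1).add (.of_nonneg hh.1)).sub (.one A)
  constructor
  · have hle := hr.sub_one_le_of_neg_one_le hsa (by simpa using add_nonneg hh.1 hh.1)
    rwa [sub_le_sub_iff_right, ← sub_nonneg] at hle
  · have hle := hr.le_of_le_one hsa (sub_le_iff_le_add.2 (add_le_add hh.2 hh.2))
    exact sub_le_comm.1 hle

end IsRangeProjection

-- Each range projection supplies one more digit of a binary expansion of `h`.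
theorem exists_mem_span_isStarProjection_norm_sub_le [PartialOrder A] [StarOrderedRing A]
    (hA : ∀ k : A, ∃ r, IsRangeProjection r k) (n : ℕ) {h : A} (hh : h ∈ Set.Icc 0 1) :
    ∃ s ∈ Submodule.span ℂ {p : A | IsStarProjection p}, ‖h - s‖ ≤ (1 / 2) ^ n := by
  induction n generalizing h with
  | zero => exact ⟨0, zero_mem _, by simpa using (CStarAlgebra.mem_Icc_iff_norm_le_one.1 hh).2⟩
  | succ n ih =>
    obtain ⟨r, hr⟩ := hA (h + h - 1)⁺
    obtain ⟨s, hs, hle⟩ := ih (hr.add_self_sub_mem_Icc hh)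
    refine ⟨(1 / 2 : ℂ) • (r + s),
      Submodule.smul_mem _ _ (add_mem (Submodule.subset_span hr.isStarProjection) hs), ?_⟩
    have hhalf : h - (1 / 2 : ℂ) • (r + s) = (1 / 2 : ℂ) • (h + h - r - s) := by module
    rw [hhalf, norm_smul, pow_succ']
    gcongr
    norm_num

theorem dense_span_isStarProjection (hA : ∀ k : A, ∃ r, IsRangeProjection r k) :
    Dense (Submodule.span ℂ {p : A | IsStarProjection p} : Set A) := by
  let _ := CStarAlgebra.spectralOrder A
  let _ := CStarAlgebra.spectralOrderedRing A
  rw [Submodule.dense_iff_topologicalClosure_eq_top, eq_top_iff,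
    ← CStarAlgebra.span_nonneg_inter_unitClosedBall, Submodule.span_le]
  rintro h ⟨h0, h1⟩
  have hh : h ∈ Set.Icc 0 1 :=
    CStarAlgebra.mem_Icc_iff_norm_le_one.2 ⟨h0, mem_closedBall_zero_iff.1 h1⟩
  refine Metric.mem_closure_iff.2 fun ε hε ↦ ?_
  obtain ⟨n, hn⟩ := exists_pow_lt_of_lt_one hε (by norm_num : (1 / 2 : ℝ) < 1)
  obtain ⟨s, hs, hle⟩ := exists_mem_span_isStarProjection_norm_sub_le hA n hh
  exact ⟨s, hs, (dist_eq_norm h s).trans_lt (hle.trans_lt hn)⟩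

end RangeProjection

section VonNeumannAlgebra

variable {H : Type*} [NormedAddCommGroup H] [InnerProductSpace ℂ H] [CompleteSpace H]

theorem isClosed_vonNeumannAlgebra (M : VonNeumannAlgebra H) :
    IsClosed (M.toStarSubalgebra : Set (H →L[ℂ] H)) := by
  rw [VonNeumannAlgebra.coe_toStarSubalgebra, ← VonNeumannAlgebra.centralizer_centralizer]
  exact Set.isClosed_centralizer _

theorem isRangeProjection_starProjection_topologicalClosure_range (T : H →L[ℂ] H) :
    IsRangeProjection T.range.topologicalClosure.starProjection T where
  isStarProjection := isStarProjection_starProjection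
  mul_eq := by
    ext v
    exact Submodule.starProjection_eq_self_iff.2 (Submodule.le_topologicalClosure _ ⟨v, rfl⟩)
  mul_eq_zero S hS := by
    have hle : T.range.topologicalClosure ≤ S.ker :=
      Submodule.topologicalClosure_minimal _
        (by rintro _ ⟨v, rfl⟩; exact DFunLike.congr_fun hS v) S.isClosed_ker
    ext v
    exact hle (Submodule.starProjection_apply_mem _ v)

theorem starProjection_topologicalClosure_range_mem (M : VonNeumannAlgebra H) {T : H →L[ℂ] H}
    (hT : T ∈ M) : T.range.topologicalClosure.starProjection ∈ M := by
  rw [VonNeumannAlgebra.IsStarProjection.mem_iff isStarProjection_starProjection]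
  intro S hS
  rw [Submodule.range_starProjection, Module.End.mem_invtSubmodule]
  refine Submodule.topologicalClosure_minimal _ ?_
    ((Submodule.isClosed_topologicalClosure _).preimage S.continuous)
  rintro _ ⟨v, rfl⟩
  have hTS : T * S = S * T := VonNeumannAlgebra.mem_commutant_iff.1 hS T hT
  exact Submodule.le_topologicalClosure _ ⟨S v, DFunLike.congr_fun hTS v⟩

theorem exists_isRangeProjection_vonNeumannAlgebra (M : VonNeumannAlgebra H)
    (T : M.toStarSubalgebra) : ∃ P : M.toStarSubalgebra, IsRangeProjection P T := by
  have hP := isRangeProjection_starProjection_topologicalClosure_range (T : H →L[ℂ] H)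
  exact ⟨⟨_, starProjection_topologicalClosure_range_mem M T.2⟩,
    ⟨Subtype.ext hP.isStarProjection.isIdempotentElem,
      Subtype.ext hP.isStarProjection.isSelfAdjoint⟩,
    Subtype.ext hP.mul_eq,
    fun S hS ↦ Subtype.ext (hP.mul_eq_zero S (congrArg Subtype.val hS))⟩

end VonNeumannAlgebra

theorem twoLocalDerivation_vonNeumannAlgebra_isDerivation_general {A : Type*} [CStarAlgebra A]
    (hA : Dense (Submodule.span ℂ {p : A | IsIdempotentElem p} : Set A)) (Δ : A → A)
    (hΔ : Is2LocalDerivationOn Δ) :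
    IsLinearMap ℂ Δ ∧ ∀ x y : A, Δ (x * y) = Δ x * y + x * Δ y :=
  ⟨⟨hΔ.map_add hA, hΔ.map_smul⟩, hΔ.map_mul hA⟩

/-- every 2-local derivation on an arbitrary von Neumann algebra
(a unital *-subalgebra `M` of `B(H)` equal to its double commutant; its underlying
algebra is the star-subalgebra `M.toStarSubalgebra` of `H →L[ℂ] H`) is a derivation;
in particular it is linear and satisfies the Leibniz rule. -/
theorem twoLocalDerivation_vonNeumannAlgebra_isDerivation
    {H : Type*} [NormedAddCommGroup H] [InnerProductSpace ℂ H] [CompleteSpace H]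
    (M : VonNeumannAlgebra H)
    (Δ : M.toStarSubalgebra → M.toStarSubalgebra)
    (hΔ : Is2LocalDerivationOn Δ) :
    IsLinearMap ℂ Δ ∧
      ∀ x y : M.toStarSubalgebra, Δ (x * y) = Δ x * y + x * Δ y := by
  let _ : CStarAlgebra M.toStarSubalgebra :=
    StarSubalgebra.cstarAlgebra M.toStarSubalgebra (h_closed := isClosed_vonNeumannAlgebra M)
  have hproj := dense_span_isStarProjection (exists_isRangeProjection_vonNeumannAlgebra M)
  exact twoLocalDerivation_vonNeumannAlgebra_isDerivation_general
    (hproj.mono (Submodule.span_mono fun _ hp ↦ hp.isIdempotentElem)) Δ hΔ
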